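/- Let S ∈ ℝ^{n×n} with S ≻ 0, Ω ∈ ℝ^{n×n} with Ω ≻ 0, F, H ∈ ℝ^{n×n}, and μ, σ > 0 such that S·F + Fᵀ·S ⪯ −S·Ω·S and μ·[[−S·Ω·S/2, S·H],[(S·H)ᵀ, 0]] ⪯ [[−2σ²·I, 0],[0, I]]. Then for every ν > 0 there exist c₁ ≥ 1 and c₂, c₃, c₄ > 0 such that for every bounded continuous d : [0,∞) → ℝⁿ, every continuous e : [0,∞) → ℝⁿ, and every differentiable x : [0,∞) → ℝⁿ satisfying x′(t) = F·x(t) + H·e(t) + d(t) and ‖e(t)‖ ≤ σ·‖x(t)‖ + ν for all t ≥ 0, one has ‖x(t)‖ ≤ c₁·e^{−c₂·t}·‖x(0)‖ + c₃·sup_{s∈[0,t]}‖d(s)‖ + c₄·ν for all t ≥ 0. -/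

import Mathlib

open Matrix

/-!
The quadratic form `V x = ⟪x, S x⟫` is an ISS-Lyapunov function. Along `x' = F x + H e + d` the
first matrix inequality gives `V' ≤ -Q x + 2 ⟪x, S (H e)⟫ + 2 ⟪x, S d⟫` with `Q x = ⟪S x, Ω (S x)⟫`.
The bound `‖e‖ ≤ σ ‖x‖ + ν` implies `‖e‖² ≤ 2 σ² ‖x‖² + 2 ν²`, so the second matrix inequality
absorbs the cross term in `e` into `Q x / 2 + 2 ν² / μ`. Half of what remains of `Q` absorbs the
disturbance term by Young's inequality; the other half gives exponential decay by Grönwall.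
-/

open Set
open scoped RealInnerProductSpace

section Real

theorem le_exp_mul_add_div_of_deriv_right_le {V V' : ℝ → ℝ} {a K b t : ℝ} (ha : 0 < a)
    (hK : 0 ≤ K) (hbt : b ≤ t) (hV : ContinuousOn V (Icc b t))
    (hV' : ∀ u ∈ Ico b t, HasDerivWithinAt V (V' u) (Ici u) u)
    (hle : ∀ u ∈ Ico b t, V' u ≤ -a * V u + K) :
    V t ≤ Real.exp (-a * (t - b)) * V b + K / a := by
  have hgronwall := le_gronwallBound_of_liminf_deriv_right_le hV
    (fun u hu _ hr => (hV' u hu).liminf_right_slope_le hr) le_rfl hle t (right_mem_Icc.2 hbt)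
  rw [gronwallBound_of_K_ne_0 (neg_ne_zero.2 ha.ne')] at hgronwall
  calc V t ≤ Real.exp (-a * (t - b)) * V b + K / a - K / a * Real.exp (-a * (t - b)) :=
        hgronwall.trans_eq (by rw [div_neg]; ring)
    _ ≤ Real.exp (-a * (t - b)) * V b + K / a := sub_le_self _ (by positivity)

theorem le_add_add_of_sq_le_add_sq_add_sq {X A B C : ℝ} (hA : 0 ≤ A) (hB : 0 ≤ B) (hC : 0 ≤ C)
    (h : X ^ 2 ≤ A ^ 2 + B ^ 2 + C ^ 2) : X ≤ A + B + C :=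
  le_of_sq_le_sq (by nlinarith [mul_nonneg hA hB, mul_nonneg hB hC, mul_nonneg hA hC])
    (by positivity)

end Real

section Lyapunov

variable {E : Type*} [NormedAddCommGroup E] [InnerProductSpace ℝ E] {S : E →L[ℝ] E}

theorem inner_apply_le_of_norm_le {s : ℝ} (hs : ‖S‖ ≤ s) (v w : E) : ⟪v, S w⟫ ≤ s * ‖v‖ * ‖w‖ :=
  calc ⟪v, S w⟫ ≤ ‖v‖ * ‖S w‖ := real_inner_le_norm v (S w)
    _ ≤ ‖v‖ * (s * ‖w‖) := by gcongr; exact S.le_of_opNorm_le hs w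
    _ = s * ‖v‖ * ‖w‖ := by ring

theorem hasDerivWithinAt_inner_apply_self (hS : (S : E →ₗ[ℝ] E).IsSymmetric) {x : ℝ → E} {x' : E}
    {A : Set ℝ} {t : ℝ} (hx : HasDerivWithinAt x x' A t) :
    HasDerivWithinAt (fun u => ⟪x u, S (x u)⟫) (2 * ⟪x t, S x'⟫) A t := by
  refine (hx.inner ℝ (S.hasFDerivAt.comp_hasDerivWithinAt t hx)).congr_deriv ?_
  rw [Function.comp_apply, ← hS.apply_clm, real_inner_comm, two_mul]

theorem neg_mul_norm_sq_add_two_mul_inner_le {s q D : ℝ} (hs : 0 < s) (hSs : ‖S‖ ≤ s) (hq : 0 < q)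
    {d : E} (hd : ‖d‖ ≤ D) (v : E) :
    -q * ‖v‖ ^ 2 + 2 * ⟪v, S d⟫ ≤ -(q / (2 * s)) * ⟪v, S v⟫ + 2 * s ^ 2 / q * D ^ 2 := by
  have hyoung : 2 * ⟪v, S d⟫ ≤ q / 2 * ‖v‖ ^ 2 + 2 * s ^ 2 / q * D ^ 2 :=
    calc 2 * ⟪v, S d⟫ ≤ 2 * (s * ‖v‖ * ‖d‖) := by gcongr; exact inner_apply_le_of_norm_le hSs v d
      _ ≤ 2 * (s * ‖v‖ * D) := by gcongr
      _ = 2 * ‖v‖ * (s * D) := by ring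
      _ ≤ q / 2 * ‖v‖ ^ 2 + (q / 2)⁻¹ * (s * D) ^ 2 := two_mul_le_add_mul_sq (half_pos hq)
      _ = q / 2 * ‖v‖ ^ 2 + 2 * s ^ 2 / q * D ^ 2 := by field_simp
  have hdecay : q / (2 * s) * ⟪v, S v⟫ ≤ q / 2 * ‖v‖ ^ 2 :=
    calc q / (2 * s) * ⟪v, S v⟫ ≤ q / (2 * s) * (s * ‖v‖ * ‖v‖) := by
          gcongr; exact inner_apply_le_of_norm_le hSs v v
      _ = q / 2 * ‖v‖ ^ 2 := by field_simp
  linarith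

theorem norm_le_of_quadratic_dissipation {p s q κ ν D t : ℝ} {x x' d : ℝ → E}
    (hS : (S : E →ₗ[ℝ] E).IsSymmetric) (hp : 0 < p) (hpS : ∀ v, p * ‖v‖ ^ 2 ≤ ⟪v, S v⟫)
    (hs : 0 < s) (hSs : ‖S‖ ≤ s) (hq : 0 < q) (hκ : 0 ≤ κ) (hν : 0 ≤ ν) (ht : 0 ≤ t) (hD : 0 ≤ D)
    (hx : ContinuousOn x (Icc 0 t)) (hx' : ∀ u ∈ Ico 0 t, HasDerivWithinAt x (x' u) (Ici u) u)
    (hd : ∀ u ∈ Ico 0 t, ‖d u‖ ≤ D)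
    (hdiss : ∀ u ∈ Ico 0 t,
      2 * ⟪x u, S (x' u)⟫ ≤ -q * ‖x u‖ ^ 2 + 2 * ⟪x u, S (d u)⟫ + κ * ν ^ 2) :
    ‖x t‖ ≤ √(s / p) * Real.exp (-(q / (4 * s)) * t) * ‖x 0‖ + √(4 * s ^ 3 / (q ^ 2 * p)) * D +
      √(2 * s * κ / (q * p)) * ν := by
  have hV : ⟪x t, S (x t)⟫ ≤ Real.exp (-(q / (2 * s)) * (t - 0)) * ⟪x 0, S (x 0)⟫ +
      (2 * s ^ 2 / q * D ^ 2 + κ * ν ^ 2) / (q / (2 * s)) :=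
    le_exp_mul_add_div_of_deriv_right_le (V := fun u => ⟪x u, S (x u)⟫) (by positivity)
      (by positivity) ht (hx.inner (S.continuous.comp_continuousOn hx))
      (fun u hu => hasDerivWithinAt_inner_apply_self hS (hx' u hu))
      (fun u hu => by linarith [hdiss u hu,
        neg_mul_norm_sq_add_two_mul_inner_le hs hSs hq (hd u hu) (x u)])
  have hexp : Real.exp (-(q / (2 * s)) * (t - 0)) = Real.exp (-(q / (4 * s)) * t) ^ 2 := by
    rw [← Real.exp_nat_mul]; congr 1; push_cast; field_simp; ring
  rw [hexp] at hV
  set η := Real.exp (-(q / (4 * s)) * t)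
  refine le_add_add_of_sq_le_add_sq_add_sq (by positivity) (by positivity) (by positivity) ?_
  simp only [mul_pow]
  rw [Real.sq_sqrt (by positivity), Real.sq_sqrt (by positivity), Real.sq_sqrt (by positivity)]
  refine le_of_mul_le_mul_left ?_ hp
  calc p * ‖x t‖ ^ 2 ≤ η ^ 2 * ⟪x 0, S (x 0)⟫ +
        (2 * s ^ 2 / q * D ^ 2 + κ * ν ^ 2) / (q / (2 * s)) := (hpS (x t)).trans hV
    _ ≤ η ^ 2 * (s * ‖x 0‖ * ‖x 0‖) +
        (2 * s ^ 2 / q * D ^ 2 + κ * ν ^ 2) / (q / (2 * s)) := by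
      gcongr; exact inner_apply_le_of_norm_le hSs (x 0) (x 0)
    _ = _ := by field_simp; ring

end Lyapunov

section Certificate

/-- `V v = ⟪v, S v⟫` certifies practical input-to-state stability of `x' = f x + h e + d` when the
error `e` obeys `‖e‖ ≤ σ ‖x‖ + ν`: it decays along `f` at a rate `Q`, half of which pays, with
weight `μ`, for the coupling `h` with `e`. The two matrix inequalities of the linear problem are
`decay` and `gain`, written as inequalities between quadratic forms with `f = F`, `h = H` and
`Q v = ⟪v, S Ω S v⟫`. -/
structure IsPracticalISSCertificate {E U : Type*} [NormedAddCommGroup E] [InnerProductSpace ℝ E]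
    [Norm U] (S : E →L[ℝ] E) (f : E → E) (h : U → E) (Q : E → ℝ) (μ σ : ℝ) : Prop where
  isSymmetric : (S : E →ₗ[ℝ] E).IsSymmetric
  coercive : ∃ p > 0, ∀ v, p * ‖v‖ ^ 2 ≤ ⟪v, S v⟫
  rate_coercive : ∃ q > 0, ∀ v, q * ‖v‖ ^ 2 ≤ Q v
  decay : ∀ v, 2 * ⟪v, S (f v)⟫ ≤ -Q v
  weight_pos : 0 < μ
  gain : ∀ v w, μ * (2 * ⟪v, S (h w)⟫ - Q v / 2) ≤ ‖w‖ ^ 2 - 2 * σ ^ 2 * ‖v‖ ^ 2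

variable {E U : Type*} [NormedAddCommGroup E] [InnerProductSpace ℝ E] [SeminormedAddGroup U]
  {S : E →L[ℝ] E} {f : E → E} {h : U → E} {Q : E → ℝ} {μ σ : ℝ}

theorem IsPracticalISSCertificate.two_mul_inner_le (hC : IsPracticalISSCertificate S f h Q μ σ)
    {ν : ℝ} {v : E} {w : U} (hw : ‖w‖ ≤ σ * ‖v‖ + ν) (d : E) :
    2 * ⟪v, S (f v + h w + d)⟫ ≤ -(Q v / 2) + 2 * ⟪v, S d⟫ + 2 / μ * ν ^ 2 := by
  have hw_sq : ‖w‖ ^ 2 ≤ 2 * σ ^ 2 * ‖v‖ ^ 2 + 2 * ν ^ 2 :=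
    calc ‖w‖ ^ 2 ≤ (σ * ‖v‖ + ν) ^ 2 := by gcongr
      _ ≤ 2 * ((σ * ‖v‖) ^ 2 + ν ^ 2) := add_sq_le
      _ = 2 * σ ^ 2 * ‖v‖ ^ 2 + 2 * ν ^ 2 := by ring
  have hcoupling : 2 * ⟪v, S (h w)⟫ - Q v / 2 ≤ 2 / μ * ν ^ 2 := by
    rw [div_mul_eq_mul_div, le_div_iff₀' hC.weight_pos]
    linarith [hC.gain v w]
  simp only [map_add, inner_add_right]
  linarith [hC.decay v]

theorem stmt_15_general (hC : IsPracticalISSCertificate S f h Q μ σ) :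
    ∃ c₁ c₂ c₃ c₄ : ℝ, 1 ≤ c₁ ∧ 0 < c₂ ∧ 0 < c₃ ∧ 0 < c₄ ∧
      ∀ (ν : ℝ) (d : ℝ → E) (e : ℝ → U) (x : ℝ → E), 0 ≤ ν →
        (∀ t, BddAbove ((fun u => ‖d u‖) '' Icc 0 t)) →
        ContinuousOn x (Ici 0) →
        (∀ t ∈ Ici (0 : ℝ), HasDerivWithinAt x (f (x t) + h (e t) + d t) (Ici t) t) →
        (∀ t ∈ Ici (0 : ℝ), ‖e t‖ ≤ σ * ‖x t‖ + ν) →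
        ∀ t ∈ Ici (0 : ℝ),
          ‖x t‖ ≤ c₁ * Real.exp (-c₂ * t) * ‖x 0‖ +
            c₃ * sSup ((fun u => ‖d u‖) '' Icc 0 t) + c₄ * ν := by
  obtain ⟨p, hp, hpS⟩ := hC.coercive
  obtain ⟨q, hq, hqQ⟩ := hC.rate_coercive
  have hμ := hC.weight_pos
  set s := ‖S‖ + p
  have hs : 0 < s := by positivity
  refine ⟨√(s / p), q / 2 / (4 * s), √(4 * s ^ 3 / ((q / 2) ^ 2 * p)),
    √(2 * s * (2 / μ) / (q / 2 * p)), ?_, by positivity, by positivity, by positivity, ?_⟩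
  · rw [Real.one_le_sqrt, one_le_div hp]
    exact le_add_of_nonneg_left (norm_nonneg S)
  intro ν d e x hν hd hx hx' he t ht
  have hd_le : ∀ u ∈ Icc 0 t, ‖d u‖ ≤ sSup ((fun u => ‖d u‖) '' Icc 0 t) :=
    fun u hu => le_csSup (hd t) (mem_image_of_mem _ hu)
  refine norm_le_of_quadratic_dissipation hC.isSymmetric hp hpS hs
    (le_add_of_nonneg_right hp.le) (half_pos hq) (by positivity) hν ht
    ((norm_nonneg _).trans (hd_le 0 (left_mem_Icc.2 ht))) (hx.mono Icc_subset_Ici_self)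
    (fun u hu => hx' u hu.1) (fun u hu => hd_le u (Ico_subset_Icc_self hu)) fun u hu => ?_
  linarith [hC.two_mul_inner_le (he u hu.1) (d u), hqQ (x u)]

end Certificate

section LinearMatrixInequality

open scoped MatrixOrder Matrix.Norms.L2Operator in
theorem exists_pos_posSemidef_sub_smul_one {ι : Type*} [Finite ι] [DecidableEq ι]
    {M : Matrix ι ι ℝ} (hM : M.PosDef) : ∃ p : ℝ, 0 < p ∧ (M - p • 1).PosSemidef := by
  cases nonempty_fintype ι
  cases isEmpty_or_nonempty ι
  · exact ⟨1, one_pos, by rw [Subsingleton.elim (M - _) 0]; exact .zero⟩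
  · obtain ⟨p, hp, hpM⟩ := (CFC.exists_pos_algebraMap_le_iff hM.isHermitian).2
      fun _ hx => (isStrictlyPositive_iff_posDef.2 hM).spectrum_pos hx
    exact ⟨p, hp, by rwa [Algebra.algebraMap_eq_smul_one] at hpM⟩

variable {ι κ : Type*} [Fintype ι] [Fintype κ]

theorem dotProduct_ofLp_self (v : EuclideanSpace ℝ κ) : v.ofLp ⬝ᵥ v.ofLp = ‖v‖ ^ 2 := by
  rw [EuclideanSpace.real_norm_sq_eq]
  simp only [dotProduct, sq]

theorem exists_pos_mul_norm_sq_le_inner_of_posDef [DecidableEq ι] {M : Matrix ι ι ℝ}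
    (hM : M.PosDef) : ∃ p > 0, ∀ v : EuclideanSpace ℝ ι,
      p * ‖v‖ ^ 2 ≤ ⟪v, toEuclideanCLM (𝕜 := ℝ) M v⟫ := by
  obtain ⟨p, hp, hpM⟩ := exists_pos_posSemidef_sub_smul_one hM
  refine ⟨p, hp, fun v => ?_⟩
  have hnonneg := hpM.dotProduct_mulVec_nonneg v.ofLp
  simpa [sub_mulVec, smul_mulVec, dotProduct_ofLp_self, inner_toEuclideanCLM] using hnonneg

theorem two_mul_dotProduct_le_of_posSemidef {S F Q : Matrix ι ι ℝ} (hS : S.IsHermitian)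
    (h : (-Q - (S * F + Fᵀ * S)).PosSemidef) (v : ι → ℝ) :
    2 * (v ⬝ᵥ S *ᵥ F *ᵥ v) ≤ -(v ⬝ᵥ Q *ᵥ v) := by
  have hadj : v ⬝ᵥ (Fᵀ * S) *ᵥ v = v ⬝ᵥ (S * F) *ᵥ v := by
    have hST : Sᵀ = S := hS
    rw [← dotProduct_transpose_mulVec, transpose_mul, transpose_transpose, hST]
  have hnonneg := h.dotProduct_mulVec_nonneg v
  simp only [star_trivial, sub_mulVec, neg_mulVec, add_mulVec, dotProduct_sub, dotProduct_neg,
    dotProduct_add, hadj] at hnonneg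
  rw [mulVec_mulVec]
  linarith

theorem mul_two_mul_dotProduct_sub_le_of_posSemidef_fromBlocks [DecidableEq ι] [DecidableEq κ]
    {Q : Matrix ι ι ℝ} {P : Matrix ι κ ℝ} {μ σ : ℝ}
    (h : (fromBlocks ((-(2 * σ ^ 2)) • (1 : Matrix ι ι ℝ)) 0 0 (1 : Matrix κ κ ℝ) -
      μ • fromBlocks (-((1 / 2 : ℝ) • Q)) P Pᵀ (0 : Matrix κ κ ℝ)).PosSemidef)
    (v : ι → ℝ) (w : κ → ℝ) :
    μ * (2 * (v ⬝ᵥ P *ᵥ w) - v ⬝ᵥ Q *ᵥ v / 2) ≤ w ⬝ᵥ w - 2 * σ ^ 2 * (v ⬝ᵥ v) := by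
  have hnonneg := h.dotProduct_mulVec_nonneg (Sum.elim v w)
  simp only [star_trivial, sub_mulVec, smul_mulVec, fromBlocks_mulVec, dotProduct_sub,
    dotProduct_smul, sumElim_dotProduct_sumElim, Sum.elim_comp_inl, Sum.elim_comp_inr,
    neg_mulVec, dotProduct_neg, dotProduct_add, one_mulVec, zero_mulVec, add_zero, zero_add,
    dotProduct_transpose_mulVec, smul_eq_mul] at hnonneg
  linarith

theorem isPracticalISSCertificate_of_lmi [DecidableEq ι] [DecidableEq κ] {S Ω F : Matrix ι ι ℝ}
    {H : Matrix ι κ ℝ} {μ σ : ℝ} (hS : S.PosDef) (hΩ : Ω.PosDef) (hμ : 0 < μ)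
    (hLyap : (-(S * Ω * S) - (S * F + Fᵀ * S)).PosSemidef)
    (hLMI : (fromBlocks ((-(2 * σ ^ 2)) • (1 : Matrix ι ι ℝ)) 0 0 (1 : Matrix κ κ ℝ) -
      μ • fromBlocks (-((1 / 2 : ℝ) • (S * Ω * S))) (S * H) (S * H)ᵀ
        (0 : Matrix κ κ ℝ)).PosSemidef) :
    IsPracticalISSCertificate (toEuclideanCLM (𝕜 := ℝ) S) (toEuclideanLin F) (toEuclideanLin H)
      (fun v => ⟪v, toEuclideanCLM (𝕜 := ℝ) (S * Ω * S) v⟫) μ σ where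
  isSymmetric := isSymmetric_toEuclideanLin_iff.2 hS.isHermitian
  coercive := exists_pos_mul_norm_sq_le_inner_of_posDef hS
  rate_coercive := by
    have hSΩS := hΩ.conjTranspose_mul_mul_same (mulVec_injective_of_isUnit hS.isUnit)
    rw [hS.isHermitian.eq] at hSΩS
    exact exists_pos_mul_norm_sq_le_inner_of_posDef hSΩS
  decay v := by
    simpa only [inner_toEuclideanCLM, ofLp_toLpLin, toLin'_apply] using
      two_mul_dotProduct_le_of_posSemidef hS.isHermitian hLyap v.ofLp
  weight_pos := hμ
  gain v w := by
    simpa only [inner_toEuclideanCLM, ofLp_toLpLin, toLin'_apply, dotProduct_ofLp_self,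
      mulVec_mulVec] using
      mul_two_mul_dotProduct_sub_le_of_posSemidef_fromBlocks hLMI v.ofLp w.ofLp

end LinearMatrixInequality

theorem stmt_15 (n : ℕ)
    (S Ω F H : Matrix (Fin n) (Fin n) ℝ) (hS : S.PosDef) (hΩ : Ω.PosDef)
    (μ σ : ℝ) (hμ : 0 < μ) (hσ : 0 < σ)
    (hLyap : (-(S * Ω * S) - (S * F + Fᵀ * S)).PosSemidef)
    (hLMI : (Matrix.fromBlocks ((-(2 * σ ^ 2)) • (1 : Matrix (Fin n) (Fin n) ℝ)) 0 0
          (1 : Matrix (Fin n) (Fin n) ℝ) -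
        μ • Matrix.fromBlocks (-((1 / 2 : ℝ) • (S * Ω * S))) (S * H) (S * H)ᵀ
          (0 : Matrix (Fin n) (Fin n) ℝ)).PosSemidef) :
    ∀ ν : ℝ, 0 < ν →
      ∃ c₁ c₂ c₃ c₄ : ℝ, 1 ≤ c₁ ∧ 0 < c₂ ∧ 0 < c₃ ∧ 0 < c₄ ∧
        ∀ d e x : ℝ → EuclideanSpace ℝ (Fin n),
          ContinuousOn d (Set.Ici 0) →
          (∃ Cd : ℝ, ∀ t ∈ Set.Ici (0 : ℝ), ‖d t‖ ≤ Cd) →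
          ContinuousOn e (Set.Ici 0) →
          (∀ t ∈ Set.Ici (0 : ℝ),
            HasDerivWithinAt x
              ((EuclideanSpace.equiv (Fin n) ℝ).symm
                  (F.mulVec (x t) + H.mulVec (e t)) + d t)
              (Set.Ici 0) t) →
          (∀ t ∈ Set.Ici (0 : ℝ), ‖e t‖ ≤ σ * ‖x t‖ + ν) →
          ∀ t ∈ Set.Ici (0 : ℝ),
            ‖x t‖ ≤ c₁ * Real.exp (-c₂ * t) * ‖x 0‖ +
              c₃ * sSup ((fun u => ‖d u‖) '' Set.Icc 0 t) + c₄ * ν := by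
  intro ν hν
  obtain ⟨c₁, c₂, c₃, c₄, hc₁, hc₂, hc₃, hc₄, hbound⟩ :=
    stmt_15_general (isPracticalISSCertificate_of_lmi hS hΩ hμ hLyap hLMI)
  exact ⟨c₁, c₂, c₃, c₄, hc₁, hc₂, hc₃, hc₄, fun d e x _ ⟨Cd, hCd⟩ _ hx he =>
    hbound ν d e x hν.le (fun _ => ⟨Cd, forall_mem_image.2 fun u hu => hCd u hu.1⟩)
      (fun t ht => (hx t ht).continuousWithinAt)
      (fun t ht => (hx t ht).mono (Ici_subset_Ici.2 ht)) he⟩
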